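/- arXiv:1904.11868 — 3 statements merged into one kernel-verified Lean document; each statement's English description precedes it below -/
import Mathlib

section
/- Let F be a finite field and n > 2 an integer. Then the unitary Cayley graph Cay(M_n(F), GL_n(F)) is not strongly regular: there do not exist parameters k, λ, μ such that it is strongly regular with parameters (q^(n^2), k, λ, μ). -/
/-- The unitary Cayley graph `Cay(M_n(F), GL_n(F))`: vertices are the `n × n`
matrices over `F`, and two matrices `A`, `B` are adjacent iff `A - B` is invertible. -/
def unitaryCayley (F : Type*) [Field F] (n : ℕ) :
    SimpleGraph (Matrix (Fin n) (Fin n) F) where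
  Adj A B := A ≠ B ∧ IsUnit (A - B)
  symm := ⟨fun A B h => ⟨h.1.symm, by rw [← neg_sub]; exact h.2.neg⟩⟩
  loopless := ⟨fun A h => h.1 rfl⟩

/-!
Inversion `X ↦ X⁻¹` identifies the common neighbours of `0` and a coordinate projection of rank `r`
with the invertible matrices `Y` whose leading `r × r` block does not have the eigenvalue `1`.
For `r = 1` this says `1 - Y₀₀ ≠ 0`; for `r = 2` it says `(1 - Y₀₀)(1 - Y₁₁) - Y₀₁ Y₁₀ ≠ 0`. Adding
`c` times column `1` to column `0` decreases both left-hand sides by `c Y₀₁`. Hence, if `Y₀₁ ≠ 0`,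
a suitable `c` turns the second condition into the first, while for `Y₀₁ = 0` the second condition
is the first together with `Y₁₁ ≠ 1`. So a projection of rank `2` has strictly fewer common
neighbours with `0` than one of rank `1`, although neither is adjacent to `0` as soon as `n > 2`.
-/

open Matrix

section CommonNeighbors

lemma ncard_isUnit_and_isUnit_sub {R : Type*} [Ring R] (a : R) :
    {x : R | IsUnit x ∧ IsUnit (x - a)}.ncard = {y : R | IsUnit y ∧ IsUnit (1 - y * a)}.ncard := by
  have sub_isUnit_iff {x : R} (hx : IsUnit x) :
      IsUnit (x - a) ↔ IsUnit (1 - Ring.inverse x * a) := by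
    have factor : x - a = x * (1 - Ring.inverse x * a) := by
      rw [mul_sub, mul_one, Ring.mul_inverse_cancel_left _ _ hx]
    rw [factor, hx.mul_left_iff]
  have inverse_invOn : Set.InvOn Ring.inverse Ring.inverse
      {x : R | IsUnit x ∧ IsUnit (x - a)} {y : R | IsUnit y ∧ IsUnit (1 - y * a)} :=
    ⟨fun _ hx ↦ Ring.inverse_inverse hx.1, fun _ hy ↦ Ring.inverse_inverse hy.1⟩
  refine (inverse_invOn.bijOn (fun x hx ↦ ?_) fun y hy ↦ ?_).ncard_eq
  · exact ⟨hx.1.ringInverse, (sub_isUnit_iff hx.1).1 hx.2⟩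
  · refine ⟨hy.1.ringInverse, (sub_isUnit_iff hy.1.ringInverse).2 ?_⟩
    rw [Ring.inverse_inverse hy.1]
    exact hy.2

lemma unitaryCayley_adj {F : Type*} [Field F] {n : ℕ} [NeZero n] {A B : Matrix (Fin n) (Fin n) F} :
    (unitaryCayley F n).Adj A B ↔ IsUnit (A - B) := by
  refine and_iff_right_of_imp fun h hAB ↦ ?_
  rw [sub_eq_zero.2 hAB] at h
  exact not_isUnit_zero h

lemma commonNeighbors_unitaryCayley_zero {F : Type*} [Field F] {n : ℕ} [NeZero n]
    (A : Matrix (Fin n) (Fin n) F) :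
    (unitaryCayley F n).commonNeighbors 0 A = {X | IsUnit X ∧ IsUnit (X - A)} := by
  ext X
  rw [SimpleGraph.mem_commonNeighbors, SimpleGraph.adj_comm, SimpleGraph.adj_comm _ A,
    unitaryCayley_adj, unitaryCayley_adj, sub_zero]
  rfl

end CommonNeighbors

section CoordProj

variable {R ι κ : Type*} [CommRing R] [DecidableEq ι] [Fintype κ]

variable (R) in
/-- The projection of `R^ι` onto the coordinates selected by `e`, factored through `R^κ`. It is
the diagonal idempotent supported on the range of `e` when `e` is injective. -/
def coordProj (e : κ → ι) : Matrix ι ι R :=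
  (1 : Matrix ι ι R).submatrix id e * (1 : Matrix ι ι R).submatrix e id

variable (R) in
/-- The invertible matrices `Y` whose principal block along `e` does not have the eigenvalue `1`,
in the sense that `1 - Y.submatrix e e` is invertible. They are the inverses of the common
neighbours of `0` and `coordProj R e`. -/
def blockRegular [Fintype ι] [DecidableEq κ] (e : κ → ι) : Set (Matrix ι ι R) :=
  {Y | IsUnit Y ∧ IsUnit (1 - Y.submatrix e e).det}

lemma det_one_sub_mul_coordProj [Fintype ι] [DecidableEq κ] (e : κ → ι) (Y : Matrix ι ι R) :
    (1 - Y * coordProj R e).det = (1 - Y.submatrix e e).det := by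
  have compress : (1 : Matrix ι ι R).submatrix e id * (Y * (1 : Matrix ι ι R).submatrix id e) =
      Y.submatrix e e := by
    ext a b
    simp [Matrix.mul_apply, Matrix.one_apply]
  rw [coordProj, ← Matrix.mul_assoc, det_one_sub_mul_comm, compress]

lemma coordProj_ne_zero [Nontrivial R] [Nonempty κ] {e : κ → ι} (he : Function.Injective e) :
    coordProj R e ≠ 0 := by
  classical
  intro h
  obtain ⟨a⟩ := ‹Nonempty κ›
  have entry_eq_zero : coordProj R e (e a) (e a) = 0 := congr_fun₂ h (e a) (e a)
  simp [coordProj, Matrix.mul_apply, Matrix.one_apply, he.eq_iff] at entry_eq_zero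

lemma not_isUnit_coordProj [Nontrivial R] [Fintype ι] (e : κ → ι)
    (hcard : Fintype.card κ < Fintype.card ι) :
    ¬ IsUnit (coordProj R e) := by
  intro h
  have rank_le : (coordProj R e).rank ≤ Fintype.card κ :=
    (rank_mul_le_left _ _).trans (rank_le_card_width _)
  rw [rank_of_isUnit _ h] at rank_le
  omega

lemma ncard_isUnit_and_isUnit_sub_coordProj [Fintype ι] [DecidableEq κ] (e : κ → ι) :
    {X | IsUnit X ∧ IsUnit (X - coordProj R e)}.ncard = (blockRegular R e).ncard := by
  rw [ncard_isUnit_and_isUnit_sub, blockRegular]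
  simp only [← det_one_sub_mul_coordProj, isUnit_iff_isUnit_det]

end CoordProj

section BlockShear

lemma mul_transvection_mul_transvection_neg {R ι κ : Type*} [CommRing R] [Fintype ι]
    [DecidableEq ι] {i j : ι} (hij : i ≠ j) (M : Matrix κ ι R) (c : R) :
    M * transvection i j c * transvection i j (-c) = M := by
  rw [Matrix.mul_assoc, transvection_mul_transvection_same _ _ hij, add_neg_cancel,
    transvection_zero, Matrix.mul_one]

variable {F ι : Type*} [Field F] [Fintype ι] [DecidableEq ι] {i j : ι}

lemma mem_blockRegular_singleton {Y : Matrix ι ι F} :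
    Y ∈ blockRegular F ![i] ↔ IsUnit Y ∧ 1 - Y i i ≠ 0 := by
  simp only [blockRegular, Set.mem_ofPred_eq, det_fin_one, Matrix.sub_apply,
    submatrix_apply]
  simp

lemma mem_blockRegular_pair {Y : Matrix ι ι F} :
    Y ∈ blockRegular F ![i, j] ↔
      IsUnit Y ∧ (1 - Y i i) * (1 - Y j j) - Y i j * Y j i ≠ 0 := by
  simp only [blockRegular, Set.mem_ofPred_eq, det_fin_two, Matrix.sub_apply,
    submatrix_apply]
  simp

/-- The coefficient of the column operation `blockShear`, which solves
`(1 - Y i i) * (1 - Y j j) - Y i j * Y j i - c * Y i j = 1 - Y i i` for `c` when `Y i j ≠ 0`.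
It is `0` when `Y i j = 0`, by the convention for division by zero. -/
def shearCoeff (i j : ι) (Y : Matrix ι ι F) : F :=
  (Y i i * Y j j - Y i j * Y j i - Y j j) / Y i j

lemma shearCoeff_mul_transvection (hij : i ≠ j) (Y : Matrix ι ι F) (c : F) :
    shearCoeff i j (Y * transvection j i c) = shearCoeff i j Y := by
  simp only [shearCoeff, mul_transvection_apply_same,
    mul_transvection_apply_of_ne _ _ _ _ hij.symm]
  ring

/-- The permutation of the matrices adding `shearCoeff i j Y` times column `j` of `Y` to its
column `i`; it is invertible because `shearCoeff` is unchanged by such column operations. -/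
def blockShear (hij : i ≠ j) : Equiv.Perm (Matrix ι ι F) where
  toFun Y := Y * transvection j i (shearCoeff i j Y)
  invFun Y := Y * transvection j i (-shearCoeff i j Y)
  left_inv Y := by
    dsimp only
    rw [shearCoeff_mul_transvection hij, mul_transvection_mul_transvection_neg hij.symm]
  right_inv Y := by
    dsimp only
    rw [shearCoeff_mul_transvection hij]
    simpa only [neg_neg] using mul_transvection_mul_transvection_neg hij.symm Y (-shearCoeff i j Y)

lemma isUnit_blockShear (hij : i ≠ j) {Y : Matrix ι ι F} :
    IsUnit (blockShear hij Y) ↔ IsUnit Y := by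
  simp only [blockShear, Equiv.coe_fn_mk, isUnit_iff_isUnit_det, det_mul,
    det_transvection_of_ne _ _ hij.symm, mul_one]

lemma blockShear_preimage_blockRegular_pair (hij : i ≠ j) :
    blockShear hij ⁻¹' blockRegular F ![i, j] =
      {Y ∈ blockRegular F ![i] | Y i j = 0 → 1 - Y j j ≠ 0} := by
  ext Y
  set c := shearCoeff i j Y
  have entry_i (a : ι) : blockShear hij Y a i = Y a i + c * Y a j :=
    mul_transvection_apply_same ..
  have entry_j (a : ι) : blockShear hij Y a j = Y a j :=
    mul_transvection_apply_of_ne _ _ _ _ hij.symm _ _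
  simp only [Set.mem_preimage, mem_blockRegular_pair, isUnit_blockShear, entry_i, entry_j,
    Set.mem_ofPred_eq, mem_blockRegular_singleton, and_assoc]
  refine and_congr_right fun _ ↦ ?_
  by_cases hY : Y i j = 0
  · simp [hY]
  · have coeff_spec : c * Y i j = Y i i * Y j j - Y i j * Y j i - Y j j := div_mul_cancel₀ _ hY
    have block_eq : (1 - (Y i i + c * Y i j)) * (1 - Y j j) - Y i j * (Y j i + c * Y j j) =
        1 - Y i i := by
      linear_combination -coeff_spec
    simp [block_eq, hY]

lemma ncard_blockRegular_pair_lt [Finite F] {k : ι} (hij : i ≠ j) (hik : i ≠ k) (hjk : j ≠ k) :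
    (blockRegular F ![i, j]).ncard < (blockRegular F ![i]).ncard := by
  let P : Matrix ι ι F := (Equiv.swap i k).permMatrix F
  have P_apply (a b : ι) : P a b = if Equiv.swap i k a = b then 1 else 0 := by
    simp [P, PEquiv.toMatrix_apply, eq_comm]
  have swap_j : Equiv.swap i k j = j := Equiv.swap_apply_of_ne_of_ne hij.symm hjk
  have P_mem : P ∈ blockRegular F ![i] := by
    rw [mem_blockRegular_singleton, isUnit_iff_isUnit_det, P_apply]
    simp [P, det_permutation, Equiv.Perm.sign_swap hik, hik.symm]
  have P_block : P i j = 0 ∧ P j j = 1 := by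
    simp [P_apply, swap_j, hjk.symm]
  have sep_ssubset : {Y ∈ blockRegular F ![i] | Y i j = 0 → 1 - Y j j ≠ 0} ⊂ blockRegular F ![i] :=
    ⟨Set.sep_subset _ _, fun h ↦ (h P_mem).2 P_block.1 (sub_eq_zero.2 P_block.2.symm)⟩
  calc (blockRegular F ![i, j]).ncard
      = (blockShear hij ⁻¹' blockRegular F ![i, j]).ncard :=
        (Set.ncard_preimage_of_injective_subset_range (blockShear hij).injective
          (by simp [(blockShear hij).surjective.range_eq])).symm
    _ = {Y ∈ blockRegular F ![i] | Y i j = 0 → 1 - Y j j ≠ 0}.ncard := by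
        rw [blockShear_preimage_blockRegular_pair]
    _ < (blockRegular F ![i]).ncard :=
        Set.ncard_lt_ncard sep_ssubset (Set.toFinite _)

end BlockShear

lemma ncard_blockRegular_of_isSRGWith {F : Type*} [Field F] [Fintype F] {n v k l m r : ℕ} [NeZero r]
    [DecidableRel (unitaryCayley F n).Adj] (h : (unitaryCayley F n).IsSRGWith v k l m)
    {e : Fin r → Fin n} (he : Function.Injective e) (hr : r < n) :
    (blockRegular F e).ncard = m := by
  have : NeZero n := ⟨by omega⟩
  have not_adj : ¬ (unitaryCayley F n).Adj 0 (coordProj F e) := by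
    rw [unitaryCayley_adj, zero_sub, IsUnit.neg_iff]
    exact not_isUnit_coordProj e (by simpa using hr)
  rw [← ncard_isUnit_and_isUnit_sub_coordProj, ← commonNeighbors_unitaryCayley_zero,
    ← Nat.card_coe_set_eq, Nat.card_eq_fintype_card]
  exact h.of_not_adj (coordProj_ne_zero he).symm not_adj

/-- For a finite field `F` with `q` elements and `n > 2`, the unitary Cayley graph
`Cay(M_n(F), GL_n(F))` is not strongly regular: there are no parameters `k, l, m`
making it strongly regular with parameters `(q ^ n ^ 2, k, l, m)`. -/
theorem unitaryCayley_not_isSRG (F : Type*) [Field F] [Fintype F]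
    (n : ℕ) (hn : 2 < n) :
    letI : DecidableRel (unitaryCayley F n).Adj := Classical.decRel _
    ¬ ∃ k l m : ℕ,
        (unitaryCayley F n).IsSRGWith ((Fintype.card F) ^ (n ^ 2)) k l m := by
  let _ : DecidableRel (unitaryCayley F n).Adj := Classical.decRel _
  rintro ⟨k, l, m, h⟩
  obtain ⟨a, b, c, hab, hac, hbc⟩ : ∃ a b c : Fin n, a ≠ b ∧ a ≠ c ∧ b ≠ c :=
    Fintype.two_lt_card_iff.1 (by simpa using hn)
  have inj_pair : Function.Injective ![a, b] :=
    Fin.cons_injective_iff.2 ⟨by simpa using hab, Function.injective_of_subsingleton _⟩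
  have card_single : (blockRegular F ![a]).ncard = m :=
    ncard_blockRegular_of_isSRGWith h (Function.injective_of_subsingleton _) (by omega)
  have card_pair : (blockRegular F ![a, b]).ncard = m :=
    ncard_blockRegular_of_isSRGWith h inj_pair hn
  have card_lt := ncard_blockRegular_pair_lt (F := F) hab hac hbc
  omega
end

section
/- Let F be a finite field with q elements. The unitary Cayley graph Cay(M_2(F), GL_2(F)) is a strongly regular graph with parameters (q^4, q^4 − q^3 − q^2 + q, q^4 − 2q^3 − q^2 + 3q, q^4 − 2q^3 + q). -/
/-!
Write `q = |F|`. The automorphisms `C ↦ P * (C - B) * Q + B'` of the graph act transitively on the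
pairs `(A, B)` with a given value of `rank (A - B)`. For distinct `2 × 2` matrices this rank is `2`
if they are adjacent and `1` if not, so the graph is strongly regular; its degree is `k = |GL₂(F)|`.

For the non-adjacent pair `E₀₀`, `0`, the identity `det (E₀₀ - C) = det C - C₁₁` shows that the
common neighbors are the invertible `C` with `det C ≠ C₁₁`. There are `(q - 1) * q ^ 2` invertible
`C` with `det C = C₁₁`, and this gives `μ`. The number `λ` of common neighbors of adjacent vertices
then follows from the relation `k * (k - λ - 1) = (q ^ 4 - k - 1) * μ`.
-/

section Matrix

variable {ι K : Type*} [Fintype ι] [DecidableEq ι] [Field K]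

theorem exists_units_mul_mul_eq_submatrix (M : Matrix ι ι K) (σ : Equiv.Perm ι) :
    ∃ P Q : (Matrix ι ι K)ˣ, (P : Matrix ι ι K) * M * Q = M.submatrix σ σ := by
  have isUnit_permMatrix (τ : Equiv.Perm ι) : IsUnit (τ.permMatrix K) := by
    simpa using (Group.isUnit τ⁻¹).map (Matrix.permMatrixHom (R := K))
  obtain ⟨P, hP⟩ := isUnit_permMatrix σ
  obtain ⟨Q, hQ⟩ := isUnit_permMatrix σ⁻¹
  refine ⟨P, Q, ?_⟩
  rw [hP, hQ, PEquiv.toMatrix_toPEquiv_mul, PEquiv.mul_toMatrix_toPEquiv]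
  rfl

theorem exists_units_mul_mul_eq_of_rank_eq {M N : Matrix ι ι K} (h : M.rank = N.rank) :
    ∃ P Q : (Matrix ι ι K)ˣ, (P : Matrix ι ι K) * M * Q = N := by
  obtain ⟨_, _, e, ⟨V, rfl⟩, ⟨U, rfl⟩, hM⟩ := M.exists_rank_normal_form
  obtain ⟨_, _, e', ⟨V', rfl⟩, ⟨U', rfl⟩, hN⟩ := h ▸ N.exists_rank_normal_form
  obtain ⟨S, T, hST⟩ :=
    exists_units_mul_mul_eq_submatrix (V * M * U : Matrix ι ι K) (e'.trans e.symm)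
  have h_normal : (S : Matrix ι ι K) * (V * M * U) * T = V' * N * U' := by
    rw [hST, hM, hN]
    ext i j
    simp
  refine ⟨V'⁻¹ * S * V, U * T * U'⁻¹, ?_⟩
  calc ((V'⁻¹ * S * V : (Matrix ι ι K)ˣ) : Matrix ι ι K) * M * ↑(U * T * U'⁻¹)
      = ↑V'⁻¹ * (S * (V * M * U) * T) * ↑U'⁻¹ := by simp only [Units.val_mul, mul_assoc]
    _ = N := by rw [h_normal]; simp [mul_assoc]

theorem matrix_isUnit_iff_rank_eq_card {M : Matrix ι ι K} :
    IsUnit M ↔ M.rank = Fintype.card ι := by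
  refine ⟨M.rank_of_isUnit, fun h => ?_⟩
  obtain ⟨P, Q, rfl⟩ := exists_units_mul_mul_eq_of_rank_eq (Matrix.rank_one.trans h.symm)
  simp

theorem matrix_eq_zero_of_rank_eq_zero {m n : Type*} [Finite m] [Fintype n] {M : Matrix m n K}
    (h : M.rank = 0) : M = 0 := by
  rw [Matrix.rank, Submodule.finrank_eq_zero, LinearMap.range_eq_bot] at h
  exact Matrix.ext_iff_mulVec.2 fun v => by simpa using LinearMap.congr_fun h v

theorem rank_eq_one_of_not_isUnit_of_ne_zero {M : Matrix (Fin 2) (Fin 2) K} (h_unit : ¬IsUnit M)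
    (h_ne : M ≠ 0) : M.rank = 1 := by
  have h_le : M.rank ≤ 2 := M.rank_le_width
  have h_ne_two : M.rank ≠ 2 := by simpa using matrix_isUnit_iff_rank_eq_card.not.1 h_unit
  have h_ne_zero : M.rank ≠ 0 := mt matrix_eq_zero_of_rank_eq_zero h_ne
  omega

theorem ncard_setOf_det_eq_apply_one_one [Finite K] :
    {C : Matrix (Fin 2) (Fin 2) K | C.det = C 1 1 ∧ C 1 1 ≠ 0}.ncard =
      (Nat.card K - 1) * Nat.card K ^ 2 := by
  let f : Kˣ × K × K → Matrix (Fin 2) (Fin 2) K :=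
    fun (d, b, c) => !![1 + b * c / d, b; c, d]
  have h_inj : f.Injective := by
    rintro ⟨d, b, c⟩ ⟨d', b', c'⟩ h
    have hb : b = b' := congrFun₂ h 0 1
    have hc : c = c' := congrFun₂ h 1 0
    have hd : (d : K) = d' := congrFun₂ h 1 1
    rw [hb, hc, Units.ext hd]
  have h_range : {C : Matrix (Fin 2) (Fin 2) K | C.det = C 1 1 ∧ C 1 1 ≠ 0} = Set.range f := by
    ext C
    constructor
    · rintro ⟨h_det, h_ne⟩
      refine ⟨(Units.mk0 _ h_ne, C 0 1, C 1 0), ?_⟩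
      have h_entry : 1 + C 0 1 * C 1 0 / C 1 1 = C 0 0 := by
        rw [Matrix.det_fin_two] at h_det
        field_simp
        linear_combination -h_det
      simp [f, h_entry, ← Matrix.eta_fin_two C]
    · rintro ⟨⟨d, b, c⟩, rfl⟩
      simp [f, Matrix.det_fin_two, add_mul]
  rw [h_range, ← Nat.card_coe_set_eq, Nat.card_range_of_injective h_inj]
  simp only [Nat.card_prod, Nat.card_units, sq]

theorem card_GL_two [Fintype K] : (Nat.card (GL (Fin 2) K) : ℤ) =
    (Fintype.card K ^ 2 - 1) * (Fintype.card K ^ 2 - Fintype.card K) := by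
  have h_one : 1 ≤ Fintype.card K ^ 2 := Nat.one_le_pow _ _ Fintype.card_pos
  have h_le : Fintype.card K ≤ Fintype.card K ^ 2 := Nat.le_self_pow two_ne_zero _
  simp [Matrix.card_GL_field, Fin.prod_univ_two, Nat.cast_sub, h_one, h_le]

end Matrix

section SimpleGraph

variable {V W : Type*} {G : SimpleGraph V} {H : SimpleGraph W}

theorem ncard_commonNeighbors_apply_iso (φ : G ≃g H) (v w : V) :
    (H.commonNeighbors (φ v) (φ w)).ncard = (G.commonNeighbors v w).ncard := by
  rw [← Set.ncard_image_of_injective _ φ.injective]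
  congr 1
  ext x
  obtain ⟨u, rfl⟩ := φ.surjective x
  simp [SimpleGraph.mem_commonNeighbors, φ.map_adj_iff]

theorem isSRGWith_param_eq_int [Fintype V] [DecidableRel G.Adj] {n k ℓ μ : ℕ}
    (h : G.IsSRGWith n k ℓ μ) {v w : V} (hvw : G.Adj v w) :
    (k : ℤ) * (k - ℓ - 1) = (n - k - 1) * μ := by
  classical
  have hkn : k < n := h.card ▸ h.regular v ▸ G.degree_lt_card_verts v
  have hℓk : ℓ < k := h.of_adj v w hvw ▸ h.regular v ▸ hvw.card_commonNeighbors_lt_degree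
  have h_param := SimpleGraph.IsSRGWith.param_eq G h (Nat.zero_lt_of_lt hkn)
  rw [Nat.sub_sub, Nat.sub_sub] at h_param
  zify [Nat.succ_le_iff.2 hℓk, Nat.succ_le_iff.2 hkn] at h_param
  linear_combination h_param

end SimpleGraph

namespace unitaryCayley

variable {F : Type*} [Field F]

section General

variable {n : ℕ} [NeZero n]

theorem adj_iff_isUnit_sub {A B : Matrix (Fin n) (Fin n) F} :
    (unitaryCayley F n).Adj A B ↔ IsUnit (A - B) :=
  and_iff_right_of_imp fun h => sub_ne_zero.1 h.ne_zero

theorem exists_iso_of_rank_sub_eq {A B A' B' : Matrix (Fin n) (Fin n) F}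
    (h : (A - B).rank = (A' - B').rank) :
    ∃ φ : unitaryCayley F n ≃g unitaryCayley F n, φ A = A' ∧ φ B = B' := by
  obtain ⟨P, Q, hPQ⟩ := exists_units_mul_mul_eq_of_rank_eq h
  let e : Equiv.Perm (Matrix (Fin n) (Fin n) F) :=
    (Equiv.subRight B).trans <| P.mulLeft.trans <| Q.mulRight.trans <| Equiv.addRight B'
  have he (C) : e C = P * (C - B) * Q + B' := rfl
  have he_sub (C D) : e C - e D = P * (C - D) * Q := by rw [he, he]; noncomm_ring
  exact ⟨⟨e, by simp [adj_iff_isUnit_sub, he_sub]⟩, by simp [he, hPQ], by simp [he]⟩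

theorem ncard_commonNeighbors_congr_rank {A B A' B' : Matrix (Fin n) (Fin n) F}
    (h : (A - B).rank = (A' - B').rank) :
    ((unitaryCayley F n).commonNeighbors A B).ncard =
      ((unitaryCayley F n).commonNeighbors A' B').ncard := by
  obtain ⟨φ, rfl, rfl⟩ := exists_iso_of_rank_sub_eq h
  exact (ncard_commonNeighbors_apply_iso φ A B).symm

theorem ncard_neighborSet (A : Matrix (Fin n) (Fin n) F) :
    ((unitaryCayley F n).neighborSet A).ncard = Nat.card (GL (Fin n) F) := by
  have h_range : (unitaryCayley F n).neighborSet A = Set.range fun g : GL (Fin n) F => A - g := by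
    ext B
    rw [SimpleGraph.mem_neighborSet, adj_iff_isUnit_sub]
    exact exists_congr fun g => by rw [eq_sub_iff_add_eq, sub_eq_iff_eq_add', eq_comm]
  rw [h_range, ← Nat.card_coe_set_eq]
  exact Nat.card_range_of_injective (sub_right_injective.comp Units.val_injective)

end General

theorem isSRGWith_ncard_commonNeighbors [Fintype F] [DecidableRel (unitaryCayley F 2).Adj] :
    (unitaryCayley F 2).IsSRGWith (Fintype.card F ^ 4) (Nat.card (GL (Fin 2) F))
      ((unitaryCayley F 2).commonNeighbors 1 0).ncard
      ((unitaryCayley F 2).commonNeighbors (Matrix.single 0 0 1) 0).ncard where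
  card := by
    rw [Module.card_eq_pow_finrank (K := F), Module.finrank_matrix]
    simp
  regular A := by
    rw [← ncard_neighborSet A, ← SimpleGraph.card_neighborSet_eq_degree,
      ← Nat.card_eq_fintype_card, Nat.card_coe_set_eq]
  of_adj A B h_adj := by
    rw [← Nat.card_eq_fintype_card, Nat.card_coe_set_eq]
    apply ncard_commonNeighbors_congr_rank
    rw [adj_iff_isUnit_sub, matrix_isUnit_iff_rank_eq_card] at h_adj
    rw [h_adj, sub_zero, Matrix.rank_one]
  of_not_adj A B h_ne h_adj := by
    rw [← Nat.card_eq_fintype_card, Nat.card_coe_set_eq]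
    apply ncard_commonNeighbors_congr_rank
    rw [adj_iff_isUnit_sub] at h_adj
    have h_not_isUnit : ¬IsUnit (Matrix.single 0 0 1 - 0 : Matrix (Fin 2) (Fin 2) F) := by
      simp [Matrix.isUnit_iff_isUnit_det, Matrix.det_fin_two]
    have h_ne_zero : (Matrix.single 0 0 1 - 0 : Matrix (Fin 2) (Fin 2) F) ≠ 0 := by
      rw [sub_zero]
      exact fun h => one_ne_zero (congrFun₂ h 0 0)
    rw [rank_eq_one_of_not_isUnit_of_ne_zero h_adj (sub_ne_zero.2 h_ne),
      rank_eq_one_of_not_isUnit_of_ne_zero h_not_isUnit h_ne_zero]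

theorem commonNeighbors_single_zero_eq_sdiff :
    (unitaryCayley F 2).commonNeighbors (Matrix.single 0 0 1) 0 =
      (unitaryCayley F 2).neighborSet 0 \ {C | C.det = C 1 1 ∧ C 1 1 ≠ 0} := by
  ext C
  have h_det : (Matrix.single 0 0 1 - C).det = C.det - C 1 1 := by
    calc (Matrix.single 0 0 1 - C).det
        = (1 - C 0 0) * (0 - C 1 1) - (0 - C 0 1) * (0 - C 1 0) := by simp [Matrix.det_fin_two]
      _ = C.det - C 1 1 := by rw [Matrix.det_fin_two]; ring
  simp only [SimpleGraph.mem_commonNeighbors, SimpleGraph.mem_neighborSet, Set.mem_sdiff,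
    Set.mem_ofPred_eq, adj_iff_isUnit_sub, zero_sub, IsUnit.neg_iff, Matrix.isUnit_iff_isUnit_det,
    isUnit_iff_ne_zero, h_det, sub_ne_zero]
  grind

theorem ncard_commonNeighbors_single_zero [Fintype F] :
    (((unitaryCayley F 2).commonNeighbors (Matrix.single 0 0 1) 0).ncard : ℤ) =
      Fintype.card F ^ 4 - 2 * Fintype.card F ^ 3 + Fintype.card F := by
  have h_subset : {C : Matrix (Fin 2) (Fin 2) F | C.det = C 1 1 ∧ C 1 1 ≠ 0} ⊆
      (unitaryCayley F 2).neighborSet 0 := by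
    rintro C ⟨h_det, h_ne⟩
    simpa [adj_iff_isUnit_sub, Matrix.isUnit_iff_isUnit_det, h_det] using h_ne
  have h_sdiff := Set.ncard_sdiff_add_ncard_of_subset h_subset
  rw [← commonNeighbors_single_zero_eq_sdiff, ncard_neighborSet,
    ncard_setOf_det_eq_apply_one_one, Nat.card_eq_fintype_card] at h_sdiff
  zify [Nat.one_le_iff_ne_zero.2 Fintype.card_ne_zero] at h_sdiff
  linear_combination h_sdiff + card_GL_two (K := F)

theorem ncard_commonNeighbors_one_zero [Fintype F] :
    (((unitaryCayley F 2).commonNeighbors 1 0).ncard : ℤ) =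
      Fintype.card F ^ 4 - 2 * Fintype.card F ^ 3 - Fintype.card F ^ 2 + 3 * Fintype.card F := by
  classical
  have h_adj : (unitaryCayley F 2).Adj 1 0 := adj_iff_isUnit_sub.2 (by simp)
  have h_param := isSRGWith_param_eq_int isSRGWith_ncard_commonNeighbors h_adj
  have h_card_ne : (Nat.card (GL (Fin 2) F) : ℤ) ≠ 0 := Nat.cast_ne_zero.2 Nat.card_pos.ne'
  refine mul_left_cancel₀ h_card_ne ?_
  rw [ncard_commonNeighbors_single_zero] at h_param
  push_cast at h_param
  rw [card_GL_two] at h_param ⊢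
  linear_combination -h_param

end unitaryCayley

/-- For a finite field `F` with `q` elements, `Cay(M_2(F), GL_2(F))` is strongly regular
with parameters `(q^4, q^4 - q^3 - q^2 + q, q^4 - 2q^3 - q^2 + 3q, q^4 - 2q^3 + q)`. -/
theorem unitaryCayley_two_isSRG (F : Type*) [Field F] [Fintype F] :
    letI : DecidableRel (unitaryCayley F 2).Adj := Classical.decRel _
    ∃ k l m : ℕ,
      (unitaryCayley F 2).IsSRGWith ((Fintype.card F) ^ 4) k l m ∧
      (k : ℤ) = (Fintype.card F : ℤ) ^ 4 - (Fintype.card F : ℤ) ^ 3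
          - (Fintype.card F : ℤ) ^ 2 + (Fintype.card F : ℤ) ∧
      (l : ℤ) = (Fintype.card F : ℤ) ^ 4 - 2 * (Fintype.card F : ℤ) ^ 3
          - (Fintype.card F : ℤ) ^ 2 + 3 * (Fintype.card F : ℤ) ∧
      (m : ℤ) = (Fintype.card F : ℤ) ^ 4 - 2 * (Fintype.card F : ℤ) ^ 3
          + (Fintype.card F : ℤ) := by
  classical
  refine ⟨_, _, _, unitaryCayley.isSRGWith_ncard_commonNeighbors, ?_,
    unitaryCayley.ncard_commonNeighbors_one_zero,
    unitaryCayley.ncard_commonNeighbors_single_zero⟩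
  rw [card_GL_two]
  ring
end

section
/- Let F be a finite field with q elements, n ≥ 1 an integer, and let E_11 be the n×n matrix with 1 in position (1,1) and 0 elsewhere. The number of matrices A ∈ M_n(F) such that A is invertible and A + E_11 is not invertible equals q^(n−1) · ∏_{k=1}^{n−1} (q^n − q^k). -/
/-!
The matrix `E₁₁ = e₁ e₁ᵀ` has rank one. By the matrix determinant lemma, an invertible `A` has
`A + u vᵀ` singular exactly when `A⁻¹ u` lies on the hyperplane `v ⬝ᵥ w = -1`. The general
linear group acts transitively on the `qⁿ - 1` nonzero vectors, so for `u, v ≠ 0` each of the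
`q^(n-1)` vectors of this hyperplane equals `g • u` for the same number of matrices `g`, namely the
order `|GL| / (qⁿ - 1)` of the stabilizer of `u`.
-/

open Matrix Module MulAction

theorem ncard_setOf_smul_mem {G X : Type*} [Group G] [MulAction G X] {x : X} {S : Set X}
    (hS : S ⊆ orbit G x) :
    {g : G | g • x ∈ S}.ncard = Nat.card (stabilizer G x) * S.ncard := by
  let T : Set (G ⧸ stabilizer G x) := ofQuotientStabilizer G x ⁻¹' S
  have hT : T.ncard = S.ncard := by
    refine Set.ncard_preimage_of_injective_subset_range (injective_ofQuotientStabilizer G x) ?_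
    intro y hy
    obtain ⟨g, rfl⟩ := hS hy
    exact ⟨g, rfl⟩
  calc {g : G | g • x ∈ S}.ncard = Nat.card (stabilizer G x × T) :=
        Nat.card_congr (QuotientGroup.preimageMkEquivSubgroupProdSet _ T)
    _ = Nat.card (stabilizer G x) * S.ncard := by
        rw [Nat.card_prod, Nat.card_coe_set_eq, hT]

theorem exists_linearEquiv_apply_eq {K V : Type*} [DivisionRing K] [AddCommGroup V] [Module K V]
    {u w : V} (hu : u ≠ 0) (hw : w ≠ 0) : ∃ e : V ≃ₗ[K] V, e u = w := by
  let f := (LinearEquiv.toSpanNonzeroSingleton K V u hu).symm ≪≫ₗ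
    LinearEquiv.toSpanNonzeroSingleton K V w hw
  obtain ⟨e, he⟩ := Submodule.exists_linearEquiv_restrict_eq f
  have hf : (f ⟨u, Submodule.mem_span_singleton_self u⟩ : V) = w := by
    rw [LinearEquiv.trans_apply, LinearEquiv.coord_self K V u hu,
      LinearEquiv.toSpanNonzeroSingleton_one]
  exact ⟨e, (he _).symm.trans hf⟩

theorem ncard_setOf_dual_apply_eq {K V : Type*} [Field K] [AddCommGroup V] [Module K V]
    [FiniteDimensional K V] {f : Dual K V} (hf : f ≠ 0) (c : K) :
    {x | f x = c}.ncard = Nat.card K ^ (finrank K V - 1) := by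
  have hsurj : Function.Surjective f := LinearMap.surjective hf
  calc {x | f x = c}.ncard = Nat.card (LinearMap.ker f) :=
        Nat.card_congr (AddMonoidHom.fiberEquivKerOfSurjective (f := f.toAddMonoidHom) hsurj c)
    _ = Nat.card K ^ finrank K (LinearMap.ker f) := natCard_eq_pow_finrank
    _ = Nat.card K ^ (finrank K V - 1) := by
        rw [← Dual.finrank_ker_add_one_of_ne_zero hf, Nat.add_sub_cancel]

section

variable {ι F : Type*} [Fintype ι]

theorem ncard_setOf_dotProduct_eq [Field F] {v : ι → F} (hv : v ≠ 0) (c : F) :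
    {w | v ⬝ᵥ w = c}.ncard = Nat.card F ^ (Fintype.card ι - 1) := by
  classical
  have hf : dotProductEquiv F ι v ≠ 0 := (dotProductEquiv F ι).map_ne_zero_iff.2 hv
  simpa using ncard_setOf_dual_apply_eq hf c

variable [DecidableEq ι]

theorem det_add_vecMulVec {R : Type*} [CommRing R] {A : Matrix ι ι R} (hA : IsUnit A.det)
    (u v : ι → R) :
    (A + vecMulVec u v).det = A.det * (1 + v ⬝ᵥ A⁻¹ *ᵥ u) := by
  rw [vecMulVec_eq Unit, det_add_replicateCol_mul_replicateRow hA, det_unique (n := Unit),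
    dotProduct_mulVec]
  rfl

theorem isUnit_add_vecMulVec_iff {R : Type*} [CommRing R] {A : Matrix ι ι R} (hA : IsUnit A)
    (u v : ι → R) :
    IsUnit (A + vecMulVec u v) ↔ IsUnit (1 + v ⬝ᵥ A⁻¹ *ᵥ u) := by
  have hdet : IsUnit A.det := (isUnit_iff_isUnit_det A).1 hA
  rw [isUnit_iff_isUnit_det, det_add_vecMulVec hdet, IsUnit.mul_iff, and_iff_right hdet]

variable [Field F]

theorem not_isUnit_inv_add_vecMulVec_iff (g : GL ι F) (u v : ι → F) :
    ¬ IsUnit ((↑g⁻¹ : Matrix ι ι F) + vecMulVec u v) ↔ v ⬝ᵥ g • u = -1 := by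
  rw [isUnit_add_vecMulVec_iff g⁻¹.isUnit, ← coe_units_inv, inv_inv, isUnit_iff_ne_zero, not_not,
    add_comm, add_eq_zero_iff_eq_neg]
  rfl

theorem orbit_GL_eq_compl_zero {u : ι → F} (hu : u ≠ 0) : orbit (GL ι F) u = {0}ᶜ := by
  ext w
  constructor
  · rintro ⟨g, rfl⟩
    exact (smul_ne_zero_iff_ne g).2 hu
  · intro hw
    obtain ⟨e, he⟩ := exists_linearEquiv_apply_eq (K := F) hu hw
    exact ⟨GeneralLinearGroup.toLin.symm (.ofLinearEquiv e),
      (LinearMap.toMatrix'_mulVec e.toLinearMap u).trans he⟩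

theorem ncard_setOf_dotProduct_smul_eq {u v : ι → F} (hu : u ≠ 0) (hv : v ≠ 0) {c : F}
    (hc : c ≠ 0) :
    {g : GL ι F | v ⬝ᵥ g • u = c}.ncard =
      Nat.card (stabilizer (GL ι F) u) * Nat.card F ^ (Fintype.card ι - 1) := by
  have hsub : {w | v ⬝ᵥ w = c} ⊆ orbit (GL ι F) u := by
    rw [orbit_GL_eq_compl_zero hu]
    rintro _ h rfl
    exact hc (h.symm.trans (dotProduct_zero v))
  rw [← ncard_setOf_dotProduct_eq hv c]
  exact ncard_setOf_smul_mem hsub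

theorem ncard_setOf_isUnit_and_not_isUnit_add_vecMulVec (u v : ι → F) :
    {A : Matrix ι ι F | IsUnit A ∧ ¬ IsUnit (A + vecMulVec u v)}.ncard =
      {g : GL ι F | v ⬝ᵥ g • u = -1}.ncard := by
  have himage : {A : Matrix ι ι F | IsUnit A ∧ ¬ IsUnit (A + vecMulVec u v)} =
      (Units.val ∘ Inv.inv) '' {g : GL ι F | v ⬝ᵥ g • u = -1} := by
    ext A
    constructor
    · rintro ⟨⟨g, rfl⟩, hg⟩
      exact ⟨g⁻¹, (not_isUnit_inv_add_vecMulVec_iff g⁻¹ u v).1 (by rwa [inv_inv]), by simp⟩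
    · rintro ⟨g, hg, rfl⟩
      exact ⟨g⁻¹.isUnit, (not_isUnit_inv_add_vecMulVec_iff g u v).2 hg⟩
  rw [himage, Set.ncard_image_of_injective _ (Units.val_injective.comp inv_injective)]

variable [Fintype F]

variable (ι F) in
theorem card_GL_eq_prod_range :
    Nat.card (GL ι F) =
      ∏ k ∈ Finset.range (Fintype.card ι),
        (Fintype.card F ^ Fintype.card ι - Fintype.card F ^ k) := by
  let e := reindexAlgEquiv F F (Fintype.equivFin ι)
  rw [Nat.card_congr (Units.mapEquiv e.toMulEquiv).toEquiv, card_GL_field]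
  exact Fin.prod_univ_eq_prod_range
    (fun k ↦ Fintype.card F ^ Fintype.card ι - Fintype.card F ^ k) _

theorem card_stabilizer_GL {u : ι → F} (hu : u ≠ 0) :
    Nat.card (stabilizer (GL ι F) u) =
      ∏ k ∈ Finset.Icc 1 (Fintype.card ι - 1),
        (Fintype.card F ^ Fintype.card ι - Fintype.card F ^ k) := by
  have : Nonempty ι := (Function.ne_iff.1 hu).nonempty
  have hn : 0 < Fintype.card ι := Fintype.card_pos
  have hpos : 0 < Fintype.card F ^ Fintype.card ι - 1 :=
    Nat.sub_pos_of_lt (Nat.one_lt_pow hn.ne' Fintype.one_lt_card)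
  have horbit : (orbit (GL ι F) u).ncard = Fintype.card F ^ Fintype.card ι - 1 := by
    rw [orbit_GL_eq_compl_zero hu, Set.ncard_compl, Set.ncard_singleton,
      Nat.card_fun, Nat.card_eq_fintype_card, Nat.card_eq_fintype_card]
  refine Nat.eq_of_mul_eq_mul_left hpos ?_
  rw [← horbit, ← index_stabilizer, Subgroup.index_mul_card, index_stabilizer, horbit,
    card_GL_eq_prod_range, Finset.range_eq_Ico, Finset.prod_eq_prod_Ico_succ_bot hn, pow_zero,
    zero_add, Finset.Icc_sub_one_right_eq_Ico_of_not_isMin (by simp)]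

theorem card_unit_and_not_unit_add_stdBasisMatrix_general {u v : ι → F} (hu : u ≠ 0) (hv : v ≠ 0) :
    ({A : Matrix ι ι F | IsUnit A ∧ ¬ IsUnit (A + vecMulVec u v)}.ncard : ℤ) =
      (Fintype.card F : ℤ) ^ (Fintype.card ι - 1) *
        ∏ k ∈ Finset.Icc 1 (Fintype.card ι - 1),
          ((Fintype.card F : ℤ) ^ Fintype.card ι - (Fintype.card F : ℤ) ^ k) := by
  rw [ncard_setOf_isUnit_and_not_isUnit_add_vecMulVec,
    ncard_setOf_dotProduct_smul_eq hu hv (neg_ne_zero.2 one_ne_zero), card_stabilizer_GL hu,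
    Nat.card_eq_fintype_card, mul_comm]
  push_cast
  congr 1
  refine Finset.prod_congr rfl fun k hk ↦ ?_
  have hkn : k ≤ Fintype.card ι := (Finset.mem_Icc.1 hk).2.trans (Nat.sub_le _ _)
  rw [Nat.cast_sub (Nat.pow_le_pow_right Fintype.card_pos hkn), Nat.cast_pow, Nat.cast_pow]

end

/-- For a finite field `F` with `q` elements and `n ≥ 1`, the number of matrices
`A ∈ M_n(F)` such that `A` is invertible and `A + E₁₁` is not invertible equals
`q^(n-1) · ∏_{k=1}^{n-1} (qⁿ - qᵏ)`. -/
theorem card_unit_and_not_unit_add_stdBasisMatrix (F : Type*) [Field F] [Fintype F]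
    (n : ℕ) (hn : 0 < n) :
    (({A : Matrix (Fin n) (Fin n) F |
        IsUnit A ∧
          ¬ IsUnit (A + Matrix.single (⟨0, hn⟩ : Fin n) ⟨0, hn⟩ (1 : F))}.ncard : ℤ)) =
      (Fintype.card F : ℤ) ^ (n - 1) *
        ∏ k ∈ Finset.Icc 1 (n - 1), ((Fintype.card F : ℤ) ^ n - (Fintype.card F : ℤ) ^ k) := by
  have hE : Pi.single (⟨0, hn⟩ : Fin n) (1 : F) ≠ (0 : Fin n → F) :=
    Pi.single_ne_zero_iff.2 one_ne_zero
  simpa only [single_eq_single_vecMulVec_single, Fintype.card_fin] using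
    card_unit_and_not_unit_add_stdBasisMatrix_general hE hE
end
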